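/- If {f_i}, {g_i} ⊆ ℤ[θ] are |·|_θ-Cauchy sequences such that |f_i·g_i|_θ → 0, then |f_i|_θ → 0 or |g_i|_θ → 0. (Hence the null Cauchy sequences form a prime ideal in the ring of |·|_θ-Cauchy sequences, so the inframetric completion of ℤ[θ] is an integral domain.) -/

import Mathlib

/-!
The infranorm `|x|_θ` is equivalent to the ordinary absolute value `|x'|` of the Galois conjugate:
there is a constant `C > 0` with `|x'| ≤ C |x|_θ` and `|x|_θ ≤ θ |x'|` for all `x ∈ ℤ[θ]`
(`norm_compare`). Granting this, the conjugate sequences `f_i'` and `g_i'` are Cauchy in `ℝ`, hence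
converge, and the product of their limits is `0`; the sequence whose conjugates tend to `0` is null.

* `|x'| ≤ C |x|_θ`: if `x / θ^k = ± ∑ b_i θ^i` is a `θ`-integer, its conjugate `± ∑ b_i (-1/θ)^i`
  is bounded by the geometric series `C = ∑ a θ^{-i}` (`conj_bound`).
* `|x|_θ ≤ θ |x'|`: every `y ≥ 0` in `ℤ[θ]` with `-1 < y' < θ` is a `θ`-integer
  (`expansion_exists`). Its digits are produced from the bottom. The window `(-1, θ)` of `y'` splits
  into `(-1, 1/θ)` (digit `0`) and the intervals `(d - 1 + 1/θ, d + 1/θ)` (digit `d`, `1 ≤ d ≤ a`).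
  Then `z = (y - d)/θ` is again nonnegative with conjugate in the window, and when `d ≥ 1` even
  `z' < θ - 1`, which forces the next digit to differ from `a`. Writing `y = p + qθ`, one has
  `p, q ≥ 0`, and `p + 2q` strictly decreases.
-/

noncomputable section

/-- The real quadratic unit `θ = (a + √(a²+4))/2`, the positive root of `θ² = aθ + 1`
(the norm `N(θ) = −1` case). -/
def theta (a : ℕ) : ℝ := ((a : ℝ) + Real.sqrt ((a : ℝ) ^ 2 + 4)) / 2

/-- The Galois conjugate `θ' = −θ⁻¹`. -/
def thetaConj (a : ℕ) : ℝ := -(theta a)⁻¹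

/-- Membership in the ring `ℤ[θ]`. -/
def inOK (a : ℕ) (x : ℝ) : Prop := ∃ p q : ℤ, x = (p : ℝ) + (q : ℝ) * theta a

/-- A finite integer sequence, supported in `[m, M]`, is admissible (norm `−1` case) if all its
entries lie in `{0, …, a}` and an entry equal to `a` is always followed (below) by a `0`. -/
def AdmissibleOn (a : ℕ) (m M : ℤ) (b : ℤ → ℤ) : Prop :=
  (∀ i, b i ≠ 0 → m ≤ i ∧ i ≤ M) ∧
  (∀ i, 0 ≤ b i ∧ b i ≤ (a : ℤ)) ∧
  (∀ i, b i = (a : ℤ) → b (i - 1) = 0)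

/-- The set `ℤ_θ` of θ-integers: signed sums `± Σ_{i=0}^{M} b_i θ^i` with `(b_i)` admissible. -/
def Ztheta (a : ℕ) : Set ℝ :=
  { x | ∃ (ε : ℤ) (M : ℤ) (b : ℤ → ℤ), (ε = 1 ∨ ε = -1) ∧ 0 ≤ M ∧
      AdmissibleOn a 0 M b ∧
      x = (ε : ℝ) * ∑ i ∈ Finset.Icc (0 : ℤ) M, (b i : ℝ) * theta a ^ i }

/-- `v(x) = max { k : ℤ | x / θ^k ∈ ℤ_θ }` (as a supremum in `ℤ`). -/
def vval (a : ℕ) (x : ℝ) : ℤ := sSup { k : ℤ | x / theta a ^ k ∈ Ztheta a }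

/-- The θ-adic infranorm `|x|_θ = θ^{−v(x)}`, with `|0|_θ = 0`. -/
def thNorm (a : ℕ) (x : ℝ) : ℝ := if x = 0 then 0 else theta a ^ (-vval a x)

/-- A sequence in `ℝ` is `|·|_θ`-Cauchy. -/
def IsThCauchy (a : ℕ) (x : ℕ → ℝ) : Prop :=
  ∀ ε : ℝ, 0 < ε → ∃ N : ℕ, ∀ i j : ℕ, N ≤ i → N ≤ j → thNorm a (x i - x j) < ε

/-! ### Arithmetic of `θ` -/

lemma theta_sq (a : ℕ) : theta a ^ 2 = a * theta a + 1 := by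
  have h := Real.sq_sqrt (show (0 : ℝ) ≤ (a : ℝ) ^ 2 + 4 by positivity)
  unfold theta
  nlinarith

lemma theta_gt_one (a : ℕ) (ha : 1 ≤ a) : 1 < theta a := by
  have h1 : (1 : ℝ) ≤ a := by exact_mod_cast ha
  have h2 : (1 : ℝ) < Real.sqrt ((a : ℝ) ^ 2 + 4) := by
    apply Real.lt_sqrt_of_sq_lt
    nlinarith
  unfold theta
  linarith

lemma theta_inv (a : ℕ) (ha : 1 ≤ a) : (theta a)⁻¹ = theta a - a := by
  have h := theta_gt_one a ha
  have h2 := theta_sq a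
  apply inv_eq_of_mul_eq_one_right
  nlinarith

lemma theta_irrational (a : ℕ) (ha : 1 ≤ a) : Irrational (theta a) := by
  have h : Irrational (Real.sqrt ((a ^ 2 + 4 : ℕ) : ℝ)) := by
    rw [irrational_sqrt_natCast_iff]
    rintro ⟨r, hr⟩
    have h1 : a < r := by nlinarith
    have h2 : r < a + 2 := by nlinarith
    have h3 : r = a + 1 := by omega
    subst h3
    ring_nf at hr
    omega
  have h2 := (h.natCast_add a).div_natCast (m := 2) (by norm_num)
  have h3 : theta a = ((a : ℝ) + Real.sqrt ((a ^ 2 + 4 : ℕ) : ℝ)) / (2 : ℕ) := by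
    unfold theta
    push_cast
    rfl
  rw [h3]
  exact h2

lemma theta_indep (a : ℕ) (ha : 1 ≤ a) (p q : ℤ) (h : (p : ℝ) + q * theta a = 0) :
    p = 0 ∧ q = 0 := by
  have hq : q = 0 := by
    by_contra hq
    have h1 := ((theta_irrational a ha).intCast_mul hq).intCast_add p
    rw [h] at h1
    exact not_irrational_zero h1
  subst hq
  simp at h
  exact ⟨h, rfl⟩

/-! ### Galois conjugation on `ℤ[θ]` -/

/-- `IsGaloisConj a x y` says that `x ∈ ℤ[θ]` and that `y = x'` is its Galois conjugate, written with
`θ' = -1/θ = a - θ`. -/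
def IsGaloisConj (a : ℕ) (x y : ℝ) : Prop :=
  ∃ p q : ℤ, x = p + q * theta a ∧ y = p + q * (a - theta a)

lemma IsGaloisConj.add {a : ℕ} {x y u v : ℝ} (h : IsGaloisConj a x y) (k : IsGaloisConj a u v) :
    IsGaloisConj a (x + u) (y + v) := by
  obtain ⟨p, q, rfl, rfl⟩ := h
  obtain ⟨r, s, rfl, rfl⟩ := k
  exact ⟨p + r, q + s, by push_cast; ring, by push_cast; ring⟩

lemma IsGaloisConj.neg {a : ℕ} {x y : ℝ} (h : IsGaloisConj a x y) : IsGaloisConj a (-x) (-y) := by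
  obtain ⟨p, q, rfl, rfl⟩ := h
  exact ⟨-p, -q, by push_cast; ring, by push_cast; ring⟩

lemma IsGaloisConj.mul {a : ℕ} {x y u v : ℝ} (h : IsGaloisConj a x y) (k : IsGaloisConj a u v) :
    IsGaloisConj a (x * u) (y * v) := by
  obtain ⟨p, q, rfl, rfl⟩ := h
  obtain ⟨r, s, rfl, rfl⟩ := k
  have h := theta_sq a
  refine ⟨p * r + q * s, p * s + q * r + q * s * a, ?_, ?_⟩
  · push_cast
    linear_combination (q * s : ℝ) * h
  · push_cast
    linear_combination (q * s : ℝ) * h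

lemma IsGaloisConj.int (a : ℕ) (n : ℤ) : IsGaloisConj a n n := ⟨n, 0, by simp, by simp⟩

lemma IsGaloisConj.theta (a : ℕ) : IsGaloisConj a (theta a) (a - theta a) := ⟨0, 1, by simp, by simp⟩

lemma IsGaloisConj.pow {a : ℕ} {x y : ℝ} (h : IsGaloisConj a x y) (n : ℕ) : IsGaloisConj a (x ^ n) (y ^ n) := by
  induction n with
  | zero => simpa using IsGaloisConj.int a 1
  | succ n ih =>
    rw [pow_succ, pow_succ]
    exact ih.mul h

lemma IsGaloisConj.zpow_theta (a : ℕ) (ha : 1 ≤ a) (n : ℤ) :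
    IsGaloisConj a (_root_.theta a ^ n) ((a - _root_.theta a) ^ n) := by
  have hi := theta_inv a ha
  have hi2 : (a - _root_.theta a)⁻¹ = -_root_.theta a := by
    rw [show (a : ℝ) - _root_.theta a = -(_root_.theta a)⁻¹ by rw [hi]; ring]
    rw [inv_neg, inv_inv]
  cases n with
  | ofNat n => simpa using (IsGaloisConj.theta a).pow n
  | negSucc n =>
    rw [zpow_negSucc, zpow_negSucc, ← inv_pow, ← inv_pow]
    apply IsGaloisConj.pow
    rw [hi, hi2]
    exact ⟨-a, 1, by push_cast; ring, by push_cast; ring⟩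

lemma IsGaloisConj.sum {a : ℕ} (s : Finset ℕ) {x y : ℕ → ℝ} (h : ∀ i, IsGaloisConj a (x i) (y i)) :
    IsGaloisConj a (∑ i ∈ s, x i) (∑ i ∈ s, y i) := by
  induction s using Finset.induction_on with
  | empty => simpa using IsGaloisConj.int a 0
  | insert i s hi ih =>
    rw [Finset.sum_insert hi, Finset.sum_insert hi]
    exact (h i).add ih

lemma IsGaloisConj.unique {a : ℕ} (ha : 1 ≤ a) {x y z : ℝ} (h : IsGaloisConj a x y) (k : IsGaloisConj a x z) :
    y = z := by
  obtain ⟨p, q, hx, rfl⟩ := h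
  obtain ⟨r, s, hx', rfl⟩ := k
  obtain ⟨h1, h2⟩ := theta_indep a ha (p - r) (q - s) (by push_cast; linarith)
  rw [sub_eq_zero.1 h1, sub_eq_zero.1 h2]

lemma IsGaloisConj.ne_zero {a : ℕ} (ha : 1 ≤ a) {x y : ℝ} (h : IsGaloisConj a x y) (hx : x ≠ 0) :
    y ≠ 0 := by
  rintro rfl
  obtain ⟨p, q, rfl, hy⟩ := h
  obtain ⟨h1, h2⟩ := theta_indep a ha (p + q * a) (-q) (by push_cast; linarith)
  have h3 : q = 0 := by omega
  subst h3
  simp at h1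
  simp [h1] at hx

/-! ### Conjugates of `θ`-integers -/

lemma sum_Icc_int (n : ℕ) (f : ℤ → ℝ) :
    ∑ i ∈ Finset.Icc (0 : ℤ) n, f i = ∑ i ∈ Finset.range (n + 1), f (i : ℤ) := by
  refine Finset.sum_nbij' (fun i => i.toNat) (fun i => (i : ℤ)) ?_ ?_ ?_ ?_ ?_
  · intro i hi
    simp only [Finset.mem_Icc, Finset.mem_range] at *
    omega
  · intro i hi
    simp only [Finset.mem_Icc, Finset.mem_range] at *
    omega
  · intro i hi
    simp only [Finset.mem_Icc] at hi
    omega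
  · intro i hi
    simp
  · intro i hi
    simp only [Finset.mem_Icc] at hi
    rw [Int.toNat_of_nonneg hi.1]

/-- The conjugates of `θ`-integers are bounded, by the full geometric series `∑ a θ^{-i}`. -/
lemma conj_bound (a : ℕ) (ha : 1 ≤ a) {x y : ℝ} (hx : x ∈ Ztheta a) (h : IsGaloisConj a x y) :
    |y| ≤ a * (1 - (theta a)⁻¹)⁻¹ := by
  obtain ⟨ε, M, b, hε, hM, ⟨-, hb, -⟩, rfl⟩ := hx
  lift M to ℕ using hM
  have hθ := theta_gt_one a ha
  have hi := theta_inv a ha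
  have hi1 : (theta a)⁻¹ < 1 := inv_lt_one_of_one_lt₀ hθ
  have hi0 : 0 < (theta a)⁻¹ := by positivity
  rw [sum_Icc_int] at h
  have hc := (IsGaloisConj.int a ε).mul (IsGaloisConj.sum (Finset.range (M + 1))
    (fun i => (IsGaloisConj.int a (b i)).mul (IsGaloisConj.zpow_theta a ha (i : ℤ))))
  rw [h.unique ha hc, abs_mul]
  have hε1 : |(ε : ℝ)| = 1 := by rcases hε with rfl | rfl <;> simp
  rw [hε1, one_mul]
  calc _ ≤ ∑ i ∈ Finset.range (M + 1), |(b i : ℝ) * (a - theta a) ^ (i : ℤ)| :=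
        Finset.abs_sum_le_sum_abs _ _
    _ ≤ ∑ i ∈ Finset.range (M + 1), (a : ℝ) * (theta a)⁻¹ ^ i := by
        apply Finset.sum_le_sum
        intro i _
        rw [abs_mul, zpow_natCast, abs_pow, show (a : ℝ) - theta a = -(theta a)⁻¹ by
          rw [hi]; ring, abs_neg, abs_of_pos hi0]
        apply mul_le_mul_of_nonneg_right _ (by positivity)
        rw [abs_of_nonneg (by exact_mod_cast (hb i).1)]
        exact_mod_cast (hb i).2
    _ = a * ∑ i ∈ Finset.range (M + 1), (theta a)⁻¹ ^ i := by rw [Finset.mul_sum]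
    _ ≤ _ := by
        apply mul_le_mul_of_nonneg_left _ (by positivity)
        rw [← tsum_geometric_of_lt_one hi0.le hi1]
        exact (summable_geometric_of_lt_one hi0.le hi1).sum_le_tsum _ (fun i _ => by positivity)

/-! ### Existence of expansions -/

/-- Every nonnegative `p + qθ` with conjugate in the window `(-1, θ)` has an admissible expansion
with no fractional part; if the conjugate is even below `θ - 1`, the lowest digit is not `a`.
The bound `n` on `p + 2q` drives the induction. -/
lemma expansion_exists (a : ℕ) (ha : 1 ≤ a) (n : ℕ) : ∀ p q : ℤ, p + 2 * q ≤ n →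
    0 ≤ (p : ℝ) + q * theta a → -1 < (p : ℝ) + q * (a - theta a) →
    (p : ℝ) + q * (a - theta a) < theta a →
    ∃ (M : ℕ) (b : ℤ → ℤ), AdmissibleOn a 0 M b ∧
      (p : ℝ) + q * theta a = ∑ i ∈ Finset.range (M + 1), (b i : ℝ) * theta a ^ i ∧
      ((p : ℝ) + q * (a - theta a) < theta a - 1 → b 0 ≠ a) := by
  have hθ := theta_gt_one a ha
  have hsq := theta_sq a
  have hi := theta_inv a ha
  have hi1 : (theta a)⁻¹ < 1 := inv_lt_one_of_one_lt₀ hθ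
  have hi0 : 0 < (theta a)⁻¹ := by positivity
  have ha1 : (1 : ℝ) ≤ a := by exact_mod_cast ha
  rw [hi] at hi1 hi0
  -- `y - y' = q (θ + 1/θ) > -θ`, so `q ≥ 0`; then `p > -1 + q/θ` gives `p ≥ 0`.
  have hnn : ∀ p q : ℤ, 0 ≤ (p : ℝ) + q * theta a → -1 < (p : ℝ) + q * (a - theta a) →
      (p : ℝ) + q * (a - theta a) < theta a → 0 ≤ p ∧ 0 ≤ q := by
    intro p q h1 h2 h3
    have hq : 0 ≤ q := by
      by_contra hq
      have : (q : ℝ) ≤ -1 := by exact_mod_cast (by omega : q ≤ -1)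
      nlinarith
    have hq' : (0 : ℝ) ≤ q := by exact_mod_cast hq
    have : (-1 : ℝ) < p := by nlinarith
    have : -1 < p := by exact_mod_cast this
    exact ⟨by omega, hq⟩
  induction n using Nat.strong_induction_on with
  | _ n ih =>
  intro p q hpq h1 h2 h3
  obtain ⟨hp, hq⟩ := hnn p q h1 h2 h3
  by_cases h0 : p = 0 ∧ q = 0
  · obtain ⟨rfl, rfl⟩ := h0
    refine ⟨0, fun _ => 0, ⟨by simp, by simp, by simp⟩, by simp, fun _ => by
      simp only [ne_eq]; omega⟩
  set yc : ℝ := (p : ℝ) + q * (a - theta a) with hyc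
  -- For `y = p + qθ` with conjugate `yc`: the digit `d`, with the window condition on the
  -- conjugate `(d - yc)θ` of `z = (y - d)/θ`.
  obtain ⟨d, hd0, hda, hd1, hd2, hdy, hdz, hdl⟩ : ∃ d : ℤ, 0 ≤ d ∧ d ≤ a ∧
      -1 < (d - yc) * theta a ∧ (d - yc) * theta a < theta a ∧
      (d : ℝ) ≤ p + q * theta a ∧ (d ≠ 0 → (d - yc) * theta a < theta a - 1) ∧
      (yc < theta a - 1 → d ≠ a) := by
    by_cases hlt : yc < theta a - a
    · refine ⟨0, le_rfl, by simp, ?_, ?_, by simpa using h1, by simp, fun _ => by omega⟩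
      · push_cast
        nlinarith
      · push_cast
        nlinarith
    · push Not at hlt
      -- As `q ≥ 0`, `yc` is no endpoint: `yc = m + 1/θ` would mean `q = -1`.
      have hne : ∀ m : ℤ, yc ≠ m + (theta a - a) := by
        intro m hm
        obtain ⟨-, h5⟩ := theta_indep a ha (p + q * a - m + a) (-q - 1) (by
          push_cast
          rw [hyc] at hm
          linarith)
        omega
      have hf1 := Int.floor_le (yc - (theta a - a))
      have hf2 := Int.lt_floor_add_one (yc - (theta a - a))
      have hf0 : 0 ≤ ⌊yc - (theta a - a)⌋ := Int.floor_nonneg.2 (by linarith)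
      have hfne := hne ⌊yc - (theta a - a)⌋
      set m := ⌊yc - (theta a - a)⌋ with hm
      have hf1' : (m : ℝ) < yc - (theta a - a) := by
        refine lt_of_le_of_ne hf1 ?_
        intro h6
        exact hfne (by linarith)
      have hma : m < a := by
        have : (m : ℝ) < a := by linarith
        exact_mod_cast this
      have hma' : (m : ℝ) + 1 ≤ a := by exact_mod_cast (by omega : m + 1 ≤ (a : ℤ))
      have hm0 : (0 : ℝ) ≤ m := by exact_mod_cast hf0
      refine ⟨m + 1, by omega, by omega, ?_, ?_, ?_, fun _ => ?_, ?_⟩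
      · push_cast
        nlinarith
      · push_cast
        nlinarith
      -- If `e = d - y > 0`, then `e - e'` is an integer multiple of `θ + 1/θ` in `(-1, θ)`,
      -- so it vanishes and `e` is an integer in `(0, 1)`.
      · by_contra hlt2
        push Not at hlt2
        push_cast at hlt2
        have hq0 : q = 0 := by
          by_contra hq0
          have : (1 : ℝ) ≤ q := by exact_mod_cast (by omega : 1 ≤ q)
          nlinarith
        subst hq0
        simp only [Int.cast_zero, zero_mul, add_zero] at hlt2 hyc
        have h7 : p < m + 1 := by exact_mod_cast hlt2
        have h8 : (p : ℝ) ≤ m := by exact_mod_cast (by omega : p ≤ m)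
        linarith
      · push_cast
        nlinarith
      · intro h9 h10
        have h11 : (m : ℝ) + 1 = a := by exact_mod_cast h10
        linarith
  -- The coordinates of `z = (y - d)/θ`.
  have hz : (((q - a * (p - d) : ℤ) : ℝ) + ((p - d : ℤ) : ℝ) * theta a) * theta a
      = p + q * theta a - d := by
    push_cast
    linear_combination (p - d : ℝ) * hsq
  have hz' : ((q - a * (p - d) : ℤ) : ℝ) + ((p - d : ℤ) : ℝ) * (a - theta a)
      = (d - yc) * theta a := by
    rw [hyc]
    push_cast
    linear_combination (-q : ℝ) * hsq
  have hz0 : 0 ≤ ((q - a * (p - d) : ℤ) : ℝ) + ((p - d : ℤ) : ℝ) * theta a := by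
    refine nonneg_of_mul_nonneg_left (b := theta a) ?_ (by linarith)
    rw [hz]
    linarith
  obtain ⟨hr, hs⟩ := hnn _ _ hz0 (by rw [hz']; exact hd1) (by rw [hz']; exact hd2)
  have hmeas : (q - a * (p - d)) + 2 * (p - d) < p + 2 * q := by
    have ha' : (1 : ℤ) ≤ a := by exact_mod_cast ha
    by_cases hq0 : q = 0
    · have : p - d = 0 := by nlinarith
      rw [this, hq0]
      simp
      omega
    · have : 1 ≤ q := by omega
      nlinarith
  obtain ⟨M, c, ⟨hc1, hc2, hc3⟩, hcs, hcl⟩ := ih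
    ((q - a * (p - d)) + 2 * (p - d)).toNat (by omega) (q - a * (p - d)) (p - d) (by omega) hz0
    (by rw [hz']; exact hd1) (by rw [hz']; exact hd2)
  rw [hz'] at hcl
  have hcneg : ∀ i, i < 0 → c i = 0 := by
    intro i hi
    by_contra hne
    have := hc1 i hne
    omega
  refine ⟨M + 1, fun i => if i = 0 then d else c (i - 1), ⟨?_, ?_, ?_⟩, ?_, ?_⟩
  · intro i hi
    dsimp only at hi
    split_ifs at hi with h
    · subst h
      exact ⟨le_rfl, by positivity⟩
    · have := hc1 _ hi
      push_cast
      omega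
  · intro i
    dsimp only
    split_ifs with h
    · exact ⟨hd0, hda⟩
    · exact hc2 _
  · intro i hi
    dsimp only at hi ⊢
    by_cases h : i = 0
    · rw [if_neg (by omega)]
      exact hcneg _ (by omega)
    rw [if_neg h] at hi
    by_cases h' : i - 1 = 0
    · rw [if_pos h']
      rw [h'] at hi
      by_contra hne
      exact hcl (hdz hne) hi
    · rw [if_neg h']
      exact hc3 _ hi
  · rw [Finset.sum_range_succ']
    have h12 : ∀ i : ℕ, (((if ((i + 1 : ℕ) : ℤ) = 0 then d else c (((i + 1 : ℕ) : ℤ) - 1) : ℤ)) : ℝ)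
        * theta a ^ (i + 1) = (c i : ℝ) * theta a ^ i * theta a := by
      intro i
      rw [if_neg (by omega), show ((i + 1 : ℕ) : ℤ) - 1 = i by push_cast; ring]
      ring
    rw [Finset.sum_congr rfl (fun i _ => h12 i), ← Finset.sum_mul, ← hcs, hz]
    simp
  · intro h13
    simpa using hdl h13

lemma mem_Ztheta_of_conj (a : ℕ) (ha : 1 ≤ a) {x y : ℝ} (h : IsGaloisConj a x y) (hy : |y| < 1) :
    x ∈ Ztheta a := by
  have hθ := theta_gt_one a ha
  have key : ∀ u v : ℝ, IsGaloisConj a u v → |v| < 1 → 0 ≤ u → ∃ (M : ℤ) (b : ℤ → ℤ), 0 ≤ M ∧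
      AdmissibleOn a 0 M b ∧ u = ∑ i ∈ Finset.Icc (0 : ℤ) M, (b i : ℝ) * theta a ^ i := by
    rintro u v ⟨p, q, rfl, rfl⟩ hv hu
    rw [abs_lt] at hv
    obtain ⟨M, b, hb, hs, -⟩ := expansion_exists a ha (p + 2 * q).toNat p q (by omega) hu hv.1
      (by linarith)
    refine ⟨M, b, by positivity, hb, ?_⟩
    rw [sum_Icc_int, hs]
    simp
  rcases le_total 0 x with hx | hx
  · obtain ⟨M, b, hM, hb, hs⟩ := key x y h hy hx
    exact ⟨1, M, b, Or.inl rfl, hM, hb, by rw [hs]; simp⟩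
  · obtain ⟨M, b, hM, hb, hs⟩ := key (-x) (-y) h.neg (by rwa [abs_neg]) (by linarith)
    refine ⟨-1, M, b, Or.inr rfl, hM, hb, ?_⟩
    rw [← hs]
    simp

/-! ### Comparison of the infranorm with the conjugate absolute value -/

lemma abs_conj_zpow (a : ℕ) (ha : 1 ≤ a) (k : ℤ) : |((a : ℝ) - theta a) ^ k| = theta a ^ (-k) := by
  have hθ := theta_gt_one a ha
  rw [abs_zpow, show (a : ℝ) - theta a = -(theta a)⁻¹ by rw [theta_inv a ha]; ring, abs_neg,
    abs_of_pos (by positivity), inv_zpow, zpow_neg]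

/-- The infranorm of `x` is equivalent to the absolute value of its conjugate. -/
lemma norm_compare (a : ℕ) (ha : 1 ≤ a) {x y : ℝ} (h : IsGaloisConj a x y) :
    |y| ≤ a * (1 - (theta a)⁻¹)⁻¹ * thNorm a x ∧ thNorm a x ≤ theta a * |y| := by
  have hθ := theta_gt_one a ha
  have hθ0 : 0 < theta a := by linarith
  by_cases hx : x = 0
  · have hy : y = 0 := by
      rw [hx] at h
      exact h.unique ha (by simpa using IsGaloisConj.int a 0)
    simp [hx, hy, thNorm]
  have hy := h.ne_zero ha hx
  have hypos : 0 < |y| := abs_pos.2 hy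
  set C : ℝ := a * (1 - (theta a)⁻¹)⁻¹ with hC
  have hconj : ∀ k : ℤ, IsGaloisConj a (x / theta a ^ k) (y * ((a : ℝ) - theta a) ^ (-k)) := by
    intro k
    rw [div_eq_mul_inv, ← zpow_neg]
    exact h.mul (IsGaloisConj.zpow_theta a ha (-k))
  have habs : ∀ k : ℤ, |y * ((a : ℝ) - theta a) ^ (-k)| = |y| * theta a ^ k := by
    intro k
    rw [abs_mul, abs_conj_zpow a ha, neg_neg]
  set S : Set ℤ := { k : ℤ | x / theta a ^ k ∈ Ztheta a } with hS
  have hup : ∀ k ∈ S, |y| ≤ C * theta a ^ (-k) := by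
    intro k hk
    have h1 := conj_bound a ha hk (hconj k)
    rw [habs] at h1
    rw [zpow_neg, ← div_eq_mul_inv, le_div_iff₀ (by positivity)]
    exact h1
  obtain ⟨n, hn1, hn2⟩ := exists_mem_Ico_zpow hypos hθ
  have hmem : -(n + 1) ∈ S := by
    apply mem_Ztheta_of_conj a ha (hconj _)
    rw [habs, zpow_neg, ← div_eq_mul_inv, div_lt_one (by positivity)]
    exact hn2
  have hbdd : BddAbove S := by
    obtain ⟨c, hc⟩ := pow_unbounded_of_one_lt C hθ
    refine ⟨c - n, fun k hk => ?_⟩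
    have h1 : theta a ^ n < theta a ^ ((c : ℤ) + -k) := by
      rw [zpow_add₀ hθ0.ne', zpow_natCast]
      calc _ ≤ |y| := hn1
        _ ≤ _ := hup k hk
        _ < _ := by
          apply mul_lt_mul_of_pos_right hc (by positivity)
    have := (zpow_lt_zpow_iff_right₀ hθ).1 h1
    omega
  have hv : vval a x ∈ S := Int.csSup_mem ⟨_, hmem⟩ hbdd
  have hv2 : -(n + 1) ≤ vval a x := le_csSup hbdd hmem
  rw [thNorm, if_neg hx]
  refine ⟨hup _ hv, ?_⟩
  calc theta a ^ (-vval a x) ≤ theta a ^ (n + 1) :=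
        zpow_le_zpow_right₀ hθ.le (by omega)
    _ = theta a * theta a ^ n := by rw [zpow_add_one₀ hθ0.ne', mul_comm]
    _ ≤ _ := mul_le_mul_of_nonneg_left hn1 hθ0.le

/-! ### Sequences -/

lemma thNorm_nonneg (a : ℕ) (ha : 1 ≤ a) (x : ℝ) : 0 ≤ thNorm a x := by
  have hθ := theta_gt_one a ha
  unfold thNorm
  split_ifs
  · exact le_rfl
  · positivity

lemma cauchy_conj (a : ℕ) (ha : 1 ≤ a) {f f' : ℕ → ℝ} (hf : ∀ i, IsGaloisConj a (f i) (f' i))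
    (hc : IsThCauchy a f) : CauchySeq f' := by
  have hθ := theta_gt_one a ha
  have hi1 : (theta a)⁻¹ < 1 := inv_lt_one_of_one_lt₀ hθ
  have hC : 0 < a * (1 - (theta a)⁻¹)⁻¹ := by
    have : (1 : ℝ) ≤ a := by exact_mod_cast ha
    have : 0 < 1 - (theta a)⁻¹ := by linarith
    positivity
  rw [Metric.cauchySeq_iff]
  intro ε hε
  obtain ⟨N, hN⟩ := hc (ε / (a * (1 - (theta a)⁻¹)⁻¹)) (by positivity)
  refine ⟨N, fun i hi j hj => ?_⟩
  have h1 := hN i j hi hj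
  have h2 := (norm_compare a ha ((hf i).add (hf j).neg)).1
  rw [← sub_eq_add_neg, ← sub_eq_add_neg] at h2
  rw [lt_div_iff₀ hC] at h1
  rw [Real.dist_eq]
  linarith

lemma null_of_conj (a : ℕ) (ha : 1 ≤ a) {f f' : ℕ → ℝ} (hf : ∀ i, IsGaloisConj a (f i) (f' i))
    (h : Filter.Tendsto f' Filter.atTop (nhds 0)) :
    Filter.Tendsto (fun i => thNorm a (f i)) Filter.atTop (nhds 0) := by
  have h1 : Filter.Tendsto (fun i => theta a * |f' i|) Filter.atTop (nhds 0) := by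
    simpa using h.abs.const_mul (theta a)
  exact squeeze_zero (fun i => thNorm_nonneg a ha _) (fun i => (norm_compare a ha (hf i)).2) h1

/-- If `{f_i}, {g_i} ⊆ ℤ[θ]` are `|·|_θ`-Cauchy sequences with
`|f_i·g_i|_θ → 0`, then `|f_i|_θ → 0` or `|g_i|_θ → 0` (so the null Cauchy sequences form a
prime ideal and the inframetric completion of `ℤ[θ]` is an integral domain). -/
theorem null_product_of_cauchy (a : ℕ) (ha : 1 ≤ a) (f g : ℕ → ℝ)
    (hf : ∀ i, inOK a (f i)) (hg : ∀ i, inOK a (g i))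
    (hcf : IsThCauchy a f) (hcg : IsThCauchy a g)
    (h : Filter.Tendsto (fun i => thNorm a (f i * g i)) Filter.atTop (nhds 0)) :
    Filter.Tendsto (fun i => thNorm a (f i)) Filter.atTop (nhds 0) ∨
    Filter.Tendsto (fun i => thNorm a (g i)) Filter.atTop (nhds 0) := by
  have ex : ∀ x, inOK a x → ∃ y, IsGaloisConj a x y := by
    rintro x ⟨p, q, hx⟩
    exact ⟨_, p, q, hx, rfl⟩
  choose f' hf' using fun i => ex _ (hf i)
  choose g' hg' using fun i => ex _ (hg i)
  obtain ⟨L, hL⟩ := cauchySeq_tendsto_of_complete (cauchy_conj a ha hf' hcf)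
  obtain ⟨K, hK⟩ := cauchySeq_tendsto_of_complete (cauchy_conj a ha hg' hcg)
  have h0 : Filter.Tendsto (fun i => f' i * g' i) Filter.atTop (nhds 0) := by
    have h1 := h.const_mul (a * (1 - (theta a)⁻¹)⁻¹)
    rw [mul_zero] at h1
    exact squeeze_zero_norm (fun i => (norm_compare a ha ((hf' i).mul (hg' i))).1) h1
  have hLK : L * K = 0 := tendsto_nhds_unique (hL.mul hK) h0
  rcases mul_eq_zero.1 hLK with rfl | rfl
  · exact Or.inl (null_of_conj a ha hf' hL)
  · exact Or.inr (null_of_conj a ha hg' hK)
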